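/- In the model y = β |ξ + a| + e, x = ξ + δ, with ξ, e, δ independent, ξ and δ Gaussian, E e = E δ = 0, σ_ξ² > 0, σ_δ² > 0, the best predictor is E[y | x] = β σ_δ √K · F(k_x x + b_x), where F(a) = 2 φ(a) + a(2Φ(a) − 1), K = σ_ξ²/σ_x², k_x = √K/σ_δ, b_x = (a + (1 − K)μ)/(σ_δ √K), and μ = E x. -/

import Mathlib

open MeasureTheory ProbabilityTheory Real
open scoped NNReal

noncomputable section

/-- Standard normal pdf. -/
def stdNormalPDF (a : ℝ) : ℝ := (Real.sqrt (2 * Real.pi))⁻¹ * Real.exp (-(a ^ 2) / 2)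

/-- Standard normal cdf. -/
def stdNormalCDF (a : ℝ) : ℝ := ((gaussianReal 0 1) (Set.Iic a)).toReal

/-- `F(a) = E|γ₀ + a| = 2 φ(a) + a (2 Φ(a) − 1)`. -/
def absF (a : ℝ) : ℝ := 2 * stdNormalPDF a + a * (2 * stdNormalCDF a - 1)

lemma key_gauss (u : ℝ) :
    ∫ g in Set.Iic u, g ∂(gaussianReal 0 1) = - stdNormalPDF u := by
  have hφ : ∀ x, gaussianPDFReal 0 1 x = stdNormalPDF x := by
    intro x
    simp [gaussianPDFReal, stdNormalPDF]
  have hint : Integrable (fun x : ℝ => stdNormalPDF x * x) := by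
    have := (integrable_mul_exp_neg_mul_sq (b := 1/2) (by norm_num)).const_mul ((Real.sqrt (2 * Real.pi))⁻¹)
    refine this.congr (ae_of_all _ fun x => ?_)
    simp only [stdNormalPDF]
    rw [show -(1/2 : ℝ) * x^2 = -(x^2)/2 by ring]; ring
  rw [← integral_indicator measurableSet_Iic, integral_gaussianReal_eq_integral_smul one_ne_zero]
  have : (fun x => gaussianPDFReal 0 1 x • (Set.Iic u).indicator (fun g => g) x)
      = (Set.Iic u).indicator (fun x => stdNormalPDF x * x) := by
    ext x
    by_cases h : x ∈ Set.Iic u <;> simp [h, hφ]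
  rw [this, integral_indicator measurableSet_Iic]
  have hd : ∀ x ∈ Set.Iic u, HasDerivAt (fun x => - stdNormalPDF x) (stdNormalPDF x * x) x := by
    intro x _
    have h1 : HasDerivAt (fun x : ℝ => -(x^2)/2) (-x) x := by
      have := ((hasDerivAt_pow 2 x).neg).div_const 2
      refine this.congr_deriv ?_
      simp
      ring
    have h2 := (h1.exp.const_mul ((Real.sqrt (2 * Real.pi))⁻¹)).neg
    refine h2.congr_deriv ?_
    simp only [stdNormalPDF]; ring
  have ht : Filter.Tendsto (fun x => - stdNormalPDF x) Filter.atBot (nhds 0) := by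
    have h1 : Filter.Tendsto (fun x : ℝ => -(x^2)/2) Filter.atBot Filter.atBot := by
      have h2 : Filter.Tendsto (fun x : ℝ => x^2) Filter.atBot Filter.atTop := by
        have := (Filter.tendsto_pow_atTop (α := ℝ) (n := 2) two_ne_zero).comp Filter.tendsto_abs_atBot_atTop
        refine this.congr fun x => by simp
      exact (Filter.tendsto_neg_atTop_atBot.comp h2).atBot_div_const (by norm_num)
    have := ((Real.tendsto_exp_atBot.comp h1).const_mul ((Real.sqrt (2 * Real.pi))⁻¹)).neg
    simpa [stdNormalPDF, Function.comp_def] using this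
  rw [integral_Iic_of_hasDerivAt_of_tendsto' hd hint.integrableOn ht, sub_zero]

lemma key_abs (u : ℝ) : ∫ g, |u - g| ∂(gaussianReal 0 1) = absF u := by
  have hid : Integrable (fun g : ℝ => g) (gaussianReal 0 1) :=
    (memLp_id_gaussianReal (μ := 0) (v := 1) 1).integrable (by simp)
  have hsub : Integrable (fun g : ℝ => u - g) (gaussianReal 0 1) := (integrable_const u).sub hid
  have h : ∀ g : ℝ, |u - g| = (g - u) + 2 * (Set.Iic u).indicator (fun g => u - g) g := by
    intro g
    by_cases hg : g ∈ Set.Iic u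
    · have : g ≤ u := hg
      rw [Set.indicator_of_mem hg, abs_of_nonneg (by linarith)]; ring
    · have : u < g := not_le.mp hg
      rw [Set.indicator_of_notMem hg, abs_of_neg (by linarith)]; ring
  have hsub' : Integrable (fun g : ℝ => g - u) (gaussianReal 0 1) := hid.sub (integrable_const u)
  simp_rw [h]
  rw [integral_add hsub'
      ((hsub.indicator measurableSet_Iic).const_mul 2), integral_sub hid (integrable_const u),
    integral_const_mul, integral_indicator measurableSet_Iic,
    integral_sub (integrable_const u) hid.integrableOn, key_gauss, integral_id_gaussianReal]
  simp [absF, stdNormalCDF, Measure.real]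
  ring

lemma condExp_indep {Ω : Type*} [MeasurableSpace Ω] (P : Measure Ω) [IsProbabilityMeasure P]
    (X Z : Ω → ℝ) (hX : Measurable X) (hZ : Measurable Z) (h : IndepFun X Z P)
    (f : ℝ × ℝ → ℝ) (hf : Measurable f) (hfi : Integrable (fun ω => f (X ω, Z ω)) P) :
    P[fun ω => f (X ω, Z ω) | MeasurableSpace.comap X inferInstance]
      =ᵐ[P] fun ω => ∫ z, f (X ω, z) ∂(P.map Z) := by
  have := Measure.isProbabilityMeasure_map (μ := P) hZ.aemeasurable
  have h1 := condExp_prod_ae_eq_integral_condDistrib hX hZ.aemeasurable hf.stronglyMeasurable hfi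
  have h2 : condDistrib Z X P =ᵐ[P.map X] Kernel.const ℝ (P.map Z) := by
    apply condDistrib_ae_eq_of_measure_eq_compProd _ hZ.aemeasurable
    rw [Measure.compProd_const]
    exact h.map_prod_eq_prod_map_map hX.aemeasurable hZ.aemeasurable
  filter_upwards [h1, ae_of_ae_map hX.aemeasurable h2] with ω h1 h2
  rw [h1, h2]; simp

lemma indep_three {Ω : Type*} [MeasurableSpace Ω] (P : Measure Ω) [IsProbabilityMeasure P]
    (ξ e δ : Ω → ℝ) (hξm : Measurable ξ) (hem : Measurable e) (hδm : Measurable δ)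
    (hindep : IndepFun ξ (fun ω => (e ω, δ ω)) P) (hindep' : IndepFun e δ P) :
    IndepFun (fun ω => (ξ ω, δ ω)) e P := by
  have a1 := Measure.isProbabilityMeasure_map (μ := P) hξm.aemeasurable
  have a2 := Measure.isProbabilityMeasure_map (μ := P) hem.aemeasurable
  have a3 := Measure.isProbabilityMeasure_map (μ := P) hδm.aemeasurable
  have hξδ : IndepFun ξ δ P := hindep.comp measurable_id measurable_snd
  rw [indepFun_iff_map_prod_eq_prod_map_map (by fun_prop) (by fun_prop),
    hξδ.map_prod_eq_prod_map_map (by fun_prop) (by fun_prop)]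
  have e1 := hindep.map_prod_eq_prod_map_map (by fun_prop) (by fun_prop)
  rw [hindep'.symm.symm.map_prod_eq_prod_map_map (by fun_prop) (by fun_prop),
    ← Measure.prod_swap (ν := P.map e)] at e1
  have e2 : P.map (fun ω => ((ξ ω, δ ω), e ω))
      = (P.map (fun ω => (ξ ω, (e ω, δ ω)))).map
        (MeasurableEquiv.prodAssoc.symm ∘ Prod.map id Prod.swap) := by
    rw [Measure.map_map (by fun_prop) (by fun_prop)]
    rfl
  rw [e2, e1, ← Measure.map_map (by fun_prop) (by fun_prop),
    ← Measure.map_prod_map _ _ measurable_id measurable_swap, Measure.map_id, Measure.map_map measurable_swap measurable_swap]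
  simp only [Prod.swap_swap_eq, Measure.map_id]
  rw [← Measure.prodAssoc_prod]
  simp

/-- In the absolute-value EIV model `y = β|ξ + a| + e`, `x = ξ + δ`, with
`ξ, e, δ` independent, `ξ, δ` Gaussian, `E e = E δ = 0`, `σξ² > 0`, `σδ² > 0`, the best
predictor is `E[y | x] = β σδ √K · F(k_x x + b_x)`, where `K = σξ²/σx²`, `k_x = √K/σδ`,
`b_x = (a + (1 − K)μ)/(σδ √K)`, `μ = E x`. -/
theorem stmt17 {Ω : Type*} [MeasurableSpace Ω] (P : Measure Ω) [IsProbabilityMeasure P]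
    (ξ e δ x y : Ω → ℝ) (hξm : Measurable ξ) (hem : Measurable e) (hδm : Measurable δ)
    (β a : ℝ) (mξ : ℝ) (vξ vδ : ℝ≥0)
    (hξ : Measure.map ξ P = gaussianReal mξ vξ)
    (hδ : Measure.map δ P = gaussianReal 0 vδ)
    (hindep : ProbabilityTheory.IndepFun ξ (fun ω => (e ω, δ ω)) P)
    (hindep' : ProbabilityTheory.IndepFun e δ P)
    (he0 : ∫ ω, e ω ∂P = 0) (heInt : Integrable e P)
    (hvξ : (0 : ℝ≥0) < vξ) (hvδ : (0 : ℝ≥0) < vδ)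
    (hy : ∀ ω, y ω = β * |ξ ω + a| + e ω)
    (hx : ∀ ω, x ω = ξ ω + δ ω)
    (μ : ℝ) (hμ : μ = ∫ ω, x ω ∂P)
    (K σδ : ℝ) (hK : K = (vξ : ℝ) / ((vξ : ℝ) + (vδ : ℝ))) (hσδ : σδ = Real.sqrt (vδ : ℝ)) :
    P[y | MeasurableSpace.comap x inferInstance]
      =ᵐ[P] fun ω =>
        β * σδ * Real.sqrt K
          * absF (Real.sqrt K / σδ * x ω + (a + (1 - K) * μ) / (σδ * Real.sqrt K)) := by
  have hvξ' : (0 : ℝ) < vξ := by exact_mod_cast hvξ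
  have hvδ' : (0 : ℝ) < vδ := by exact_mod_cast hvδ
  have hK0 : 0 < K := by rw [hK]; positivity
  have hσ0 : 0 < σδ := by rw [hσδ]; positivity
  have hsK : 0 < Real.sqrt K := Real.sqrt_pos.mpr hK0
  have hσ2 : σδ ^ 2 = vδ := by rw [hσδ, Real.sq_sqrt hvδ'.le]
  have hsK2 : Real.sqrt K ^ 2 = K := Real.sq_sqrt hK0.le
  have hKs : K * ((vξ : ℝ) + vδ) = vξ := by rw [hK]; field_simp
  obtain ⟨s, hs⟩ : ∃ s, s = σδ * Real.sqrt K := ⟨_, rfl⟩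
  have hs0 : 0 < s := by rw [hs]; positivity
  have hs2 : s ^ 2 = vδ * K := by rw [hs, mul_pow, hσ2, hsK2]
  have hxm : Measurable x := by
    rw [show x = fun ω => ξ ω + δ ω from funext hx]; fun_prop
  have hξG : HasGaussianLaw ξ P := ⟨by rw [hξ]; infer_instance⟩
  have hδG : HasGaussianLaw δ P := ⟨by rw [hδ]; infer_instance⟩
  have hξδ : IndepFun ξ δ P := hindep.comp measurable_id measurable_snd
  have hG : HasGaussianLaw (fun ω => (ξ ω, δ ω)) P := hξδ.hasGaussianLaw hξG hδG
  have hξ2 := hξG.memLp_two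
  have hδ2 := hδG.memLp_two
  have hEξ : ∫ ω, ξ ω ∂P = mξ := by
    rw [← integral_id_gaussianReal (μ := mξ) (v := vξ), ← hξ,
      integral_map hξm.aemeasurable (by fun_prop)]
  have hEδ : ∫ ω, δ ω ∂P = 0 := by
    rw [← integral_id_gaussianReal (μ := 0) (v := vδ), ← hδ,
      integral_map hδm.aemeasurable (by fun_prop)]
  have hμ' : μ = mξ := by
    rw [hμ]; simp_rw [hx]
    rw [integral_add hξG.integrable hδG.integrable, hEξ, hEδ, add_zero]
  have hVξ : cov[ξ, ξ; P] = vξ := by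
    rw [covariance_self hξm.aemeasurable, ← variance_id_gaussianReal (μ := mξ) (v := vξ), ← hξ,
      variance_map aemeasurable_id hξm.aemeasurable]; rfl
  have hVδ : cov[δ, δ; P] = vδ := by
    rw [covariance_self hδm.aemeasurable, ← variance_id_gaussianReal (μ := 0) (v := vδ), ← hδ,
      variance_map aemeasurable_id hδm.aemeasurable]; rfl
  have hC : cov[ξ, δ; P] = 0 := hξδ.covariance_eq_zero hξ2 hδ2
  have hC' : cov[δ, ξ; P] = 0 := by rw [covariance_comm, hC]
  -- the linear residual
  let W : Ω → ℝ := fun ω => (K / s) * δ ω - ((1 - K) / s) * ξ ω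
  have hWm : Measurable W := by fun_prop
  have hxW : IndepFun (fun ω => ξ ω + δ ω) W P := by
    apply HasGaussianLaw.indepFun_of_covariance_eq_zero
    · let L : ℝ × ℝ →L[ℝ] ℝ × ℝ :=
        (ContinuousLinearMap.fst ℝ ℝ ℝ + ContinuousLinearMap.snd ℝ ℝ ℝ).prod
          ((K / s) • ContinuousLinearMap.snd ℝ ℝ ℝ - ((1 - K) / s) • ContinuousLinearMap.fst ℝ ℝ ℝ)
      exact hG.map_fun L
    · have h1 : cov[fun ω => ξ ω + δ ω, W; P] = cov[ξ + δ, (K / s) • δ - ((1 - K) / s) • ξ; P] := rfl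
      rw [h1, covariance_add_left hξ2 hδ2 ((hδ2.const_smul _).sub (hξ2.const_smul _)),
        covariance_sub_right hξ2 (hδ2.const_smul _) (hξ2.const_smul _),
        covariance_sub_right hδ2 (hδ2.const_smul _) (hξ2.const_smul _)]
      simp only [covariance_smul_right, hVξ, hVδ, hC, hC']
      have : K * vδ = (1 - K) * vξ := by linarith
      field_simp
      linarith
  let Z : Ω → ℝ := fun ω => W ω + ((1 - K) / s) * mξ
  have hZm : Measurable Z := by fun_prop
  have hxZ : IndepFun x Z P := by
    rw [show x = fun ω => ξ ω + δ ω from funext hx]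
    exact hxW.comp measurable_id (measurable_id.add_const _)
  have hZlaw : P.map Z = gaussianReal 0 1 := by
    have l1 : HasLaw ξ (gaussianReal mξ vξ) P := ⟨hξm.aemeasurable, hξ⟩
    have l2 : HasLaw δ (gaussianReal 0 vδ) P := ⟨hδm.aemeasurable, hδ⟩
    have l3 := gaussianReal_const_mul l2 (K / s)
    have l4 := gaussianReal_const_mul l1 (-((1 - K) / s))
    have l34 : IndepFun (fun ω => (K / s) * δ ω) (fun ω => (-((1 - K) / s)) * ξ ω) P :=
      hξδ.symm.comp (φ := fun t => (K / s) * t) (ψ := fun t => (-((1 - K) / s)) * t)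
        (by fun_prop) (by fun_prop)
    have l5 := gaussianReal_add_gaussianReal_of_indepFun l34 l3.map_eq l4.map_eq
    have l6 : HasLaw ((fun ω => (K / s) * δ ω) + (fun ω => (-((1 - K) / s)) * ξ ω)) _ P :=
      ⟨by fun_prop, l5⟩
    have l7 := (gaussianReal_add_const l6 (((1 - K) / s) * mξ)).map_eq
    have hZ' : Z = fun ω => ((fun ω => (K / s) * δ ω) + (fun ω => (-((1 - K) / s)) * ξ ω)) ω
        + ((1 - K) / s) * mξ := by
      ext ω; simp [Z, W]; ring
    rw [hZ', l7]
    congr 1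
    · ring
    · ext
      push_cast
      rw [neg_sq, div_pow, div_pow, hs2]
      field_simp
      have : (vξ : ℝ) = K * ((vξ : ℝ) + vδ) := hKs.symm
      have h2 : (1 - K) * vξ = K * vδ := by linarith
      linear_combination (1 - K) * h2
  have hdecomp : ∀ ω, |ξ ω + a| = s * |(Real.sqrt K / σδ * x ω + (a + (1 - K) * μ) / (σδ * Real.sqrt K)) - Z ω| := by
    intro ω
    rw [← abs_of_pos hs0, ← abs_mul, ← hs]
    congr 1
    have h1 : Real.sqrt K / σδ = K / s := by
      rw [hs, div_eq_div_iff hσ0.ne' (by positivity)]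
      nlinarith [hsK2]
    simp only [Z, W]
    rw [h1, hx, hμ']
    field_simp
    ring
  let f : ℝ × ℝ → ℝ := fun p => β * (s * |(Real.sqrt K / σδ * p.1 + (a + (1 - K) * μ) / (σδ * Real.sqrt K)) - p.2|)
  have hf : Measurable f := by fun_prop
  have hyf : y = (fun ω => f (x ω, Z ω)) + e := by
    ext ω; rw [hy, hdecomp]; rfl
  have hfi : Integrable (fun ω => f (x ω, Z ω)) P := by
    have : (fun ω => f (x ω, Z ω)) = fun ω => β * |ξ ω + a| := by
      ext ω; rw [hdecomp]
    rw [this]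
    exact ((hξG.integrable.add (integrable_const a)).abs).const_mul β
  have c1 := condExp_indep P x Z hxm hZm hxZ f hf hfi
  have hxe : IndepFun x e P := by
    rw [show x = fun ω => ξ ω + δ ω from funext hx]
    exact (indep_three P ξ e δ hξm hem hδm hindep hindep').comp
      (measurable_fst.add measurable_snd) measurable_id
  have c2 := condExp_indep P x e hxm hem hxe (fun p => p.2) measurable_snd heInt
  have hee : ∫ z, z ∂(P.map e) = 0 := by
    rw [integral_map hem.aemeasurable (by fun_prop), he0]
  rw [hyf]
  refine (condExp_add hfi heInt _).trans ?_
  filter_upwards [c1, c2] with ω h1 h2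
  rw [Pi.add_apply, h1, h2, hee, hZlaw, add_zero]
  simp only [f]
  rw [integral_const_mul, integral_const_mul, key_abs, hs]
  ring
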